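/- arXiv:2303.09090 — 2 statements merged into one kernel-verified Lean document; each statement's English description precedes it below -/
import Mathlib

section
/- Let n ≥ 1, let a_i < b_i for i = 1,…,n, and let u : ∏_{i=1}^n [a_i,b_i] → [0,∞] be a convex function on the box. Then for every x in the open box ∏_{i=1}^n (a_i,b_i) one has (∏_{i=1}^n min{x_i − a_i, b_i − x_i}) · u(x) ≤ ∫_{∏_{i=1}^n [a_i,b_i]} u dλⁿ, where λⁿ denotes n-dimensional Lebesgue measure. -/
open MeasureTheory
open scoped ENNReal

/-- A `[0,∞]`-valued function on a set `K ⊆ ℝⁿ` is convex if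
`u((1−t)x+ty) ≤ (1−t)u(x)+t·u(y)` in `[0,∞]` for all `x, y ∈ K` and `t ∈ [0,1]`. -/
def ConvexFnOn {n : ℕ} (K : Set (Fin n → ℝ)) (u : (Fin n → ℝ) → ℝ≥0∞) : Prop :=
  ∀ ⦃x⦄, x ∈ K → ∀ ⦃y⦄, y ∈ K → ∀ ⦃t : ℝ⦄, 0 ≤ t → t ≤ 1 →
    u ((1 - t) • x + t • y) ≤ ENNReal.ofReal (1 - t) * u x + ENNReal.ofReal t * u y

/-! A `[0,∞]`-valued convex function `u` satisfies `2 u(x) ≤ u(y) + u(2x - y)`. Integrating this in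
`y` over a set `s` symmetric about `x`, where both terms on the right have the same integral, gives
the Hermite–Hadamard inequality `μ(s) u(x) ≤ ∫_s u dμ`; `u` is a.e. measurable because its sublevel
sets are convex, hence null measurable. For the largest box centred at `x` inside `∏ [aᵢ, bᵢ]` this
is the estimate, even with the additional factor `2ⁿ`. -/

section PointReflection

open Set

variable {G : Type*} [AddCommGroup G]

theorem mapsTo_pointReflection_Icc [PartialOrder G] [IsOrderedAddMonoid G] (x r : G) :
    MapsTo (Equiv.pointReflection x) (Icc (x - r) (x + r)) (Icc (x - r) (x + r)) := by
  rintro y ⟨hlower, hupper⟩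
  rw [Equiv.pointReflection_apply, vsub_eq_sub, vadd_eq_add, sub_add_eq_add_sub, add_sub_assoc]
  exact ⟨sub_eq_add_neg x r ▸ add_le_add_right (neg_le_sub_iff_le_add.2 hupper) x,
    add_le_add_right (sub_le_comm.1 hlower) x⟩

variable [MeasurableSpace G] [MeasurableAdd G] [MeasurableNeg G] (μ : Measure G)
  [μ.IsAddLeftInvariant] [μ.IsNegInvariant]

theorem measurePreserving_pointReflection (x : G) :
    MeasurePreserving (Equiv.pointReflection x) μ μ := by
  rw [Equiv.pointReflection_eq_subLeft]
  exact μ.measurePreserving_sub_left (2 • x)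

theorem setLIntegral_comp_pointReflection {s : Set G} {x : G}
    (hs : MapsTo (Equiv.pointReflection x) s s) (f : G → ℝ≥0∞) :
    ∫⁻ y in s, f (Equiv.pointReflection x y) ∂μ = ∫⁻ y in s, f y ∂μ := by
  have hinv : Function.Involutive (Equiv.pointReflection x) := Equiv.pointReflection_involutive x
  have hpre : Equiv.pointReflection x ⁻¹' s = s :=
    Subset.antisymm (fun y hy ↦ hinv y ▸ hs hy) hs
  have hmp : MeasurePreserving (Equiv.pointReflection x) μ μ :=
    measurePreserving_pointReflection μ x
  have hemb : MeasurableEmbedding (Equiv.pointReflection x) :=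
    (MeasurableEquiv.ofInvolutive _ hinv hmp.measurable).measurableEmbedding
  simpa only [hpre] using hmp.setLIntegral_comp_preimage_emb hemb f s

end PointReflection

section Convexity

open Set
open scoped NNReal

section Module

variable {E : Type*} [AddCommGroup E] [Module ℝ E] {s : Set E} {x y : E}

-- `ℝ≥0∞` is a module over `ℝ≥0` but not over `ℝ`, so `ConvexOn` has to be used with scalars `ℝ≥0`.
theorem quasiconvexOn_real_of_convexOn_nnreal {β : Type*} [AddCommMonoid β] [PartialOrder β]
    [IsOrderedAddMonoid β] [Module ℝ≥0 β] [PosSMulMono ℝ≥0 β] {f : E → β}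
    (hf : ConvexOn ℝ≥0 s f) : QuasiconvexOn ℝ s f :=
  fun c ↦ NNReal.convex_iff.1 (hf.convex_le c)

theorem two_mul_le_add_pointReflection_of_convexOn {u : E → ℝ≥0∞} (hu : ConvexOn ℝ≥0 s u)
    (hy : y ∈ s) (hxy : Equiv.pointReflection x y ∈ s) :
    2 * u x ≤ u y + u (Equiv.pointReflection x y) := by
  have hmid : (2⁻¹ : ℝ≥0) • y + (2⁻¹ : ℝ≥0) • Equiv.pointReflection x y = x := by
    simp only [Equiv.pointReflection_apply, vsub_eq_sub, vadd_eq_add, NNReal.smul_def]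
    push_cast
    module
  have hconv : u x ≤ 2⁻¹ * (u y + u (Equiv.pointReflection x y)) := by
    simpa only [hmid, mul_add, ENNReal.smul_def, smul_eq_mul, ENNReal.coe_inv_two] using
      hu.2 hy hxy zero_le zero_le (by norm_num : (2⁻¹ : ℝ≥0) + 2⁻¹ = 1)
  calc 2 * u x ≤ 2 * (2⁻¹ * (u y + u (Equiv.pointReflection x y))) := by gcongr
    _ = u y + u (Equiv.pointReflection x y) :=
      ENNReal.mul_inv_cancel_left two_ne_zero ENNReal.ofNat_ne_top

end Module

section Haar

variable {E : Type*} [NormedAddCommGroup E] [NormedSpace ℝ E] [FiniteDimensional ℝ E]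
  [MeasurableSpace E] [BorelSpace E] {s : Set E} {x : E}

theorem aemeasurable_restrict_of_quasiconvexOn {β : Type*} [LinearOrder β] [TopologicalSpace β]
    [OrderTopology β] [SecondCountableTopology β] [MeasurableSpace β] [BorelSpace β]
    (μ : Measure E) [μ.IsAddHaarMeasure] {f : E → β} (hf : QuasiconvexOn ℝ s f) :
    AEMeasurable f (μ.restrict s) := by
  have hsublevel (c : β) : NullMeasurableSet (f ⁻¹' Iic c) (μ.restrict s) := by
    rw [nullMeasurableSet_restrict (hf.convex.nullMeasurableSet μ), inter_comm]
    exact (hf c).nullMeasurableSet μ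
  have hnull : NullMeasurable f (μ.restrict s) :=
    measurable_of_Iic (α := β) (δ := NullMeasurableSpace E (μ.restrict s)) hsublevel
  exact hnull.aemeasurable

theorem measure_mul_le_setLIntegral_of_convexOn (μ : Measure E) [μ.IsAddHaarMeasure]
    {u : E → ℝ≥0∞} (hu : ConvexOn ℝ≥0 s u) (hs : MapsTo (Equiv.pointReflection x) s s) :
    μ s * u x ≤ ∫⁻ y in s, u y ∂μ := by
  have hquasi := quasiconvexOn_real_of_convexOn_nnreal hu
  have hnull : NullMeasurableSet s μ := hquasi.convex.nullMeasurableSet μ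
  have hmeas : AEMeasurable u (μ.restrict s) := aemeasurable_restrict_of_quasiconvexOn μ hquasi
  have hdouble : 2 * (μ s * u x) ≤ 2 * ∫⁻ y in s, u y ∂μ :=
    calc 2 * (μ s * u x) = ∫⁻ _ in s, 2 * u x ∂μ := by rw [setLIntegral_const]; ring
      _ ≤ ∫⁻ y in s, (u y + u (Equiv.pointReflection x y)) ∂μ := by
        refine lintegral_mono_ae ?_
        filter_upwards [ae_restrict_mem₀ hnull] with y hy
        exact two_mul_le_add_pointReflection_of_convexOn hu hy (hs hy)
      _ = ∫⁻ y in s, u y ∂μ + ∫⁻ y in s, u (Equiv.pointReflection x y) ∂μ :=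
        lintegral_add_left' hmeas _
      _ = 2 * ∫⁻ y in s, u y ∂μ := by rw [setLIntegral_comp_pointReflection μ hs, two_mul]
  exact (ENNReal.mul_le_mul_iff_right two_ne_zero ENNReal.ofNat_ne_top).1 hdouble

end Haar

end Convexity

theorem volume_Icc_sub_add {ι : Type*} [Fintype ι] (x r : ι → ℝ) :
    volume (Set.Icc (x - r) (x + r)) = 2 ^ Fintype.card ι * ∏ i, ENNReal.ofReal (r i) := by
  have hside (i : ι) : ENNReal.ofReal ((x + r) i - (x - r) i) = 2 * ENNReal.ofReal (r i) := by
    rw [Pi.add_apply, Pi.sub_apply, add_sub_sub_cancel, ← two_mul,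
      ENNReal.ofReal_mul zero_le_two, ENNReal.ofReal_ofNat]
  simp_rw [Real.volume_Icc_pi, hside, Finset.prod_mul_distrib, Finset.prod_const, Finset.card_univ]

open scoped NNReal in
theorem ConvexFnOn.convexOn {n : ℕ} {K : Set (Fin n → ℝ)} {u : (Fin n → ℝ) → ℝ≥0∞}
    (hu : ConvexFnOn K u) (hK : Convex ℝ K) : ConvexOn ℝ≥0 K u := by
  refine ⟨NNReal.convex_iff.2 hK, fun y hy z hz s t _ _ hst ↦ ?_⟩
  have hs : (1 : ℝ) - t = s := sub_eq_of_eq_add (mod_cast hst.symm)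
  have ht : (t : ℝ) ≤ 1 := by exact_mod_cast hst ▸ le_add_self
  simpa only [hs, ENNReal.ofReal_coe_nnreal, ENNReal.smul_def, smul_eq_mul, NNReal.smul_def] using
    hu hy hz t.coe_nonneg ht

theorem mean_value_estimate_general {n : ℕ} {a b : Fin n → ℝ} {u : (Fin n → ℝ) → ℝ≥0∞}
    (hu : ConvexFnOn (Set.Icc a b) u) {x : Fin n → ℝ} (hx : x ∈ Set.Icc a b) :
    2 ^ n * (ENNReal.ofReal (∏ i, min (x i - a i) (b i - x i)) * u x)
      ≤ ∫⁻ y in Set.Icc a b, u y := by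
  set r : Fin n → ℝ := fun i ↦ min (x i - a i) (b i - x i)
  have hr : 0 ≤ r := fun i ↦ le_min (sub_nonneg.2 (hx.1 i)) (sub_nonneg.2 (hx.2 i))
  have hsub : Set.Icc (x - r) (x + r) ⊆ Set.Icc a b :=
    Set.Icc_subset_Icc (fun i ↦ le_sub_comm.1 (min_le_left _ _))
      (fun i ↦ le_sub_iff_add_le'.1 (min_le_right _ _))
  have hbox := (hu.convexOn (convex_Icc a b)).subset hsub (NNReal.convex_iff.2 (convex_Icc _ _))
  calc 2 ^ n * (ENNReal.ofReal (∏ i, r i) * u x)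
      = volume (Set.Icc (x - r) (x + r)) * u x := by
        rw [volume_Icc_sub_add, Fintype.card_fin, ENNReal.ofReal_prod_of_nonneg fun i _ ↦ hr i,
          mul_assoc]
    _ ≤ ∫⁻ y in Set.Icc (x - r) (x + r), u y :=
      measure_mul_le_setLIntegral_of_convexOn volume hbox (mapsTo_pointReflection_Icc x r)
    _ ≤ ∫⁻ y in Set.Icc a b, u y := lintegral_mono_set hsub

/-- Mean value estimate: for a non-negative convex function `u` on the box
`∏ [aᵢ, bᵢ]` and every point `x` of the open box,
`(∏ min {xᵢ−aᵢ, bᵢ−xᵢ}) · u(x) ≤ ∫_{∏ [aᵢ,bᵢ]} u dλⁿ`. -/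
theorem mean_value_estimate (n : ℕ) (hn : 1 ≤ n) (a b : Fin n → ℝ)
    (hab : ∀ i, a i < b i) (u : (Fin n → ℝ) → ℝ≥0∞)
    (hu : ConvexFnOn (Set.Icc a b) u) :
    ∀ x ∈ Set.univ.pi (fun i => Set.Ioo (a i) (b i)),
      ENNReal.ofReal (∏ i, min (x i - a i) (b i - x i)) * u x
        ≤ ∫⁻ y in Set.Icc a b, u y := by
  intro x hx
  have hxab : x ∈ Set.Icc a b := ⟨fun i ↦ (hx i trivial).1.le, fun i ↦ (hx i trivial).2.le⟩
  exact (le_mul_of_one_le_left' (one_le_pow₀ one_le_two)).trans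
    (mean_value_estimate_general hu hxab)
end

section
/- Let 2 ≤ p ≤ n be integers, r > 0, and let u : Δⁿ_p(r) → [0,∞] be convex. Then ∫_{Δⁿ_p(r/2)} u^{p/(p−1)} dλⁿ ≤ (p−1) · (2/r)^{(n−p)/(p−1)} · ∑_{i=1}^p ( ∫_{∂_iΔⁿ_p(r)} u dx' )^{p/(p−1)}. -/
open MeasureTheory
open scoped ENNReal

/-- `Δⁿ_p(r) = { x ∈ [0,∞)^p × (−r,r)^{n−p} : x₁+⋯+x_p < r }`. -/
def stdSlab (n p : ℕ) (r : ℝ) : Set (Fin n → ℝ) :=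
  {x | (∀ i : Fin n, (i : ℕ) < p → 0 ≤ x i) ∧
       (∀ i : Fin n, p ≤ (i : ℕ) → x i ∈ Set.Ioo (-r) r) ∧
       ∑ i ∈ Finset.univ.filter (fun i : Fin n => (i : ℕ) < p), x i < r}

/-- The `(n−1)`-dimensional Lebesgue measure on the hyperplane `{xᵢ = 0} ⊆ ℝⁿ`,
realized as the product of Lebesgue measures in the coordinates `j ≠ i` with the
Dirac mass at `0` in the coordinate `i`. -/
noncomputable def hyperplaneMeasure (n : ℕ) (i : Fin n) : Measure (Fin n → ℝ) :=
  Measure.pi (fun j => if j = i then Measure.dirac 0 else volume)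

/-- `∂ᵢΔⁿ_p(r) = { x ∈ Δⁿ_p(r) : xᵢ = 0 }`. -/
def slabFace (n p : ℕ) (r : ℝ) (i : Fin n) : Set (Fin n → ℝ) :=
  {x ∈ stdSlab n p r | x i = 0}

/-- `∫_{∂ᵢΔⁿ_p(r)} u dx'`, the integral of `u` over the boundary face `∂ᵢΔⁿ_p(r)`
with respect to the `(n−1)`-dimensional Lebesgue measure of the hyperplane `{xᵢ=0}`. -/
noncomputable def faceIntegral (n p : ℕ) (r : ℝ) (i : Fin n)
    (u : (Fin n → ℝ) → ℝ≥0∞) : ℝ≥0∞ :=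
  ∫⁻ x in slabFace n p r i, u x ∂(hyperplaneMeasure n i)

/-!
For each of the first `p` coordinates `i` choose a second one `j = σ i`. Inside the half-size
simplex, convexity in the plane of the coordinates `i` and `j` bounds `u x` by values of `u` on the
two edges `xᵢ = 0` and `xⱼ = 0`, arranged in an envelope that does not depend on `xᵢ` and whose
integral over the other coordinates is `Aᵢ + Aⱼ / 4`, where `Aᵢ` is the integral of `u` over the
`i`-th face. For the `n - p` free coordinates, averaging over a centred cube of side `r` replaces
`u x` by an integral, since a convex function is at most its symmetric averages. Thus
`r ^ (n - p) * u x` is bounded by `p` functions, the `i`-th independent of `xᵢ`, and the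
Loomis–Whitney inequality controls the integral of the `p / (p - 1)`-th power by
`∏ i, (Aᵢ + A_{σ i} / 4) ^ (1 / (p - 1))`. For a cyclic `σ`, the inequality of arithmetic and
geometric means and convexity of `t ↦ t ^ q` for `q = p / (p - 1)` turn this into a multiple
`(5 / 4) ^ q / p` of `∑ i, Aᵢ ^ q`, and `(5 / 4) ^ q ≤ p * (p - 1)` since `q ≤ 2`.
-/

open Function

section Marginal

variable {ι : Type*} [DecidableEq ι] {X : ι → Type*}

lemma dependsOn_compl_singleton_iff {β : Type*} {f : (∀ i, X i) → β} {i : ι} :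
    DependsOn f {i}ᶜ ↔ ∀ x t, f (update x i t) = f x := by
  refine ⟨fun hf x t ↦ hf fun k hk ↦ update_of_ne hk t x, fun hf x y hxy ↦ ?_⟩
  have hy : update x i (y i) = y := by
    ext k
    rcases eq_or_ne k i with rfl | hk
    · simp
    · simpa [hk] using hxy k hk
  rw [← hf x (y i), hy]

variable [∀ i, MeasurableSpace (X i)] {μ : ∀ i, Measure (X i)}

lemma dependsOn_lmarginal {f : (∀ i, X i) → ℝ≥0∞} {s : Set ι} (hf : DependsOn f s)
    (T : Finset ι) : DependsOn (∫⋯∫⁻_T, f ∂μ) s := by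
  refine fun x y hxy ↦ lintegral_congr fun z ↦ hf fun k hk ↦ ?_
  by_cases hkT : k ∈ T <;> simp [updateFinset, hkT, hxy k hk]

lemma lmarginal_erase_lmarginal_compl [Fintype ι] [∀ i, SigmaFinite (μ i)]
    {f : (∀ i, X i) → ℝ≥0∞} (hf : Measurable f) {S : Finset ι} {i : ι} (hi : i ∈ S) :
    ∫⋯∫⁻_S.erase i, ∫⋯∫⁻_Sᶜ, f ∂μ ∂μ = ∫⋯∫⁻_Finset.univ.erase i, f ∂μ := by
  rw [← lmarginal_union _ _ hf
    (Finset.disjoint_of_subset_left (S.erase_subset i) disjoint_compl_right)]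
  congr 1
  grind [Finset.mem_compl]

/-- The Loomis–Whitney inequality. When the coordinate `j ∈ S` is integrated out, the factor `G j`
is constant and Hölder's inequality applies to the `S.card - 1` others. -/
theorem lmarginal_prod_rpow_le [∀ i, SigmaFinite (μ i)] {S : Finset ι} (hS : 2 ≤ S.card)
    {G : ι → (∀ i, X i) → ℝ≥0∞} (hG : ∀ i, Measurable (G i))
    (hdep : ∀ i ∈ S, DependsOn (G i) {i}ᶜ) {T : Finset ι} (hT : T ⊆ S) (x : ∀ i, X i) :
    (∫⋯∫⁻_T, fun y ↦ ∏ i ∈ S, G i y ^ (1 / ((S.card : ℝ) - 1)) ∂μ) x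
      ≤ ∏ i ∈ S, (∫⋯∫⁻_T.erase i, G i ∂μ) x ^ (1 / ((S.card : ℝ) - 1)) := by
  have hS' : (1 : ℝ) < S.card := by exact_mod_cast hS
  set e := 1 / ((S.card : ℝ) - 1) with he
  have he0 : 0 ≤ e := by rw [he]; exact one_div_nonneg.2 (by linarith)
  induction T using Finset.induction generalizing x with
  | empty => simp
  | insert j T hj ih =>
    have hjS : j ∈ S := hT (Finset.mem_insert_self _ _)
    have hslice (i : ι) : Measurable fun t ↦ (∫⋯∫⁻_T.erase i, G i ∂μ) (update x j t) :=
      ((hG i).lmarginal μ).comp (measurable_update x)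
    have hexp : ∑ _i ∈ S.erase j, e = 1 := by
      rw [Finset.sum_const, Finset.card_erase_of_mem hjS, nsmul_eq_mul,
        Nat.cast_pred (by omega), he, mul_one_div_cancel (by linarith)]
    calc (∫⋯∫⁻_insert j T, fun y ↦ ∏ i ∈ S, G i y ^ e ∂μ) x
        = ∫⁻ t, (∫⋯∫⁻_T, fun y ↦ ∏ i ∈ S, G i y ^ e ∂μ) (update x j t) ∂μ j :=
          lmarginal_insert _ (Finset.measurable_prod _ fun i _ ↦ (hG i).pow_const e) hj x
      _ ≤ ∫⁻ t, ∏ i ∈ S, (∫⋯∫⁻_T.erase i, G i ∂μ) (update x j t) ^ e ∂μ j :=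
          lintegral_mono fun t ↦ ih ((Finset.subset_insert _ _).trans hT) _
      _ = ∫⁻ t, (∫⋯∫⁻_T, G j ∂μ) x ^ e *
            ∏ i ∈ S.erase j, (∫⋯∫⁻_T.erase i, G i ∂μ) (update x j t) ^ e ∂μ j := by
          refine lintegral_congr fun t ↦ ?_
          rw [← Finset.mul_prod_erase _ _ hjS, Finset.erase_eq_of_notMem hj,
            dependsOn_compl_singleton_iff.1 (dependsOn_lmarginal (hdep j hjS) T)]
      _ = (∫⋯∫⁻_T, G j ∂μ) x ^ e *
            ∫⁻ t, ∏ i ∈ S.erase j, (∫⋯∫⁻_T.erase i, G i ∂μ) (update x j t) ^ e ∂μ j :=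
          lintegral_const_mul _ (Finset.measurable_prod _ fun i _ ↦ (hslice i).pow_const e)
      _ ≤ (∫⋯∫⁻_T, G j ∂μ) x ^ e *
            ∏ i ∈ S.erase j, (∫⁻ t, (∫⋯∫⁻_T.erase i, G i ∂μ) (update x j t) ∂μ j) ^ e := by
          gcongr
          exact ENNReal.lintegral_prod_norm_pow_le _ (fun i _ ↦ (hslice i).aemeasurable) hexp
            fun _ _ ↦ he0
      _ = ∏ i ∈ S, (∫⋯∫⁻_(insert j T).erase i, G i ∂μ) x ^ e := by
          rw [← Finset.mul_prod_erase S _ hjS, Finset.erase_insert hj]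
          congr 1
          refine Finset.prod_congr rfl fun i hi ↦ ?_
          rw [Finset.erase_insert_of_ne (Finset.ne_of_mem_erase hi).symm,
            lmarginal_insert _ (hG i) (by simp [hj])]

theorem setLIntegral_restrict_preimage_le [Fintype ι] [∀ i, SigmaFinite (μ i)] {T : Finset ι}
    {B : Set (∀ i : T, X i)} (hB : MeasurableSet B) {f : (∀ i, X i) → ℝ≥0∞} (hf : Measurable f)
    {K : ℝ≥0∞} (hK : ∀ x, (∫⋯∫⁻_Tᶜ, f ∂μ) x ≤ K) :
    ∫⁻ x in T.restrict ⁻¹' B, f x ∂Measure.pi μ ≤ Measure.pi (fun i : T ↦ μ i) B * K := by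
  have hcyl : MeasurableSet (T.restrict ⁻¹' B) := T.measurable_restrict hB
  rcases isEmpty_or_nonempty (∀ i, X i) with _ | ⟨⟨x₀⟩⟩
  · simp [Measure.eq_zero_of_isEmpty]
  have hinner (x : ∀ i, X i) : (∫⋯∫⁻_Tᶜ, (T.restrict ⁻¹' B).indicator f ∂μ) x
      ≤ (T.restrict ⁻¹' B).indicator (fun _ ↦ K) x := by
    have hx (y) : updateFinset x Tᶜ y ∈ T.restrict ⁻¹' B ↔ x ∈ T.restrict ⁻¹' B := by
      have : T.restrict (updateFinset x Tᶜ y) = T.restrict x := by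
        ext ⟨k, hk⟩
        simp [updateFinset, hk]
      simp [this]
    by_cases h : x ∈ T.restrict ⁻¹' B
    · simpa [lmarginal, Set.indicator, hx, h] using hK x
    · simp only [lmarginal, Set.indicator, hx, h, if_false, lintegral_zero, le_refl]
  have hupd (y) : updateFinset x₀ T y ∈ T.restrict ⁻¹' B ↔ y ∈ B := by
    have : T.restrict (updateFinset x₀ T y) = y := by
      ext ⟨k, hk⟩
      simp [updateFinset, hk]
    simp [this]
  calc ∫⁻ x in T.restrict ⁻¹' B, f x ∂Measure.pi μ
      = (∫⋯∫⁻_T, ∫⋯∫⁻_Tᶜ, (T.restrict ⁻¹' B).indicator f ∂μ ∂μ) x₀ := by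
        rw [← lintegral_indicator hcyl, lintegral_eq_lmarginal_univ x₀, ← Finset.union_compl T,
          lmarginal_union _ _ (hf.indicator hcyl) disjoint_compl_right]
    _ ≤ (∫⋯∫⁻_T, (T.restrict ⁻¹' B).indicator (fun _ ↦ K) ∂μ) x₀ := lmarginal_mono hinner x₀
    _ = ∫⁻ y, B.indicator (fun _ ↦ K) y ∂Measure.pi (fun i : T ↦ μ i) :=
        lintegral_congr fun y ↦ by classical simp only [Set.indicator_apply, hupd]
    _ = Measure.pi (fun i : T ↦ μ i) B * K := by rw [lintegral_indicator_const hB, mul_comm]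

theorem setLIntegral_rpow_le_of_le_lmarginal [Fintype ι] [∀ i, SigmaFinite (μ i)] {S : Finset ι}
    (hS : 2 ≤ S.card) {G : ι → (∀ i, X i) → ℝ≥0∞} (hG : ∀ i, Measurable (G i))
    (hdep : ∀ i ∈ S, DependsOn (G i) {i}ᶜ) {A : ι → ℝ≥0∞}
    (hA : ∀ i ∈ S, ∀ x, (∫⋯∫⁻_Finset.univ.erase i, G i ∂μ) x ≤ A i)
    {B : Set (∀ i : ↥Sᶜ, X i)} (hB : MeasurableSet B) {D : Set (∀ i, X i)}
    (hD : D ⊆ Sᶜ.restrict ⁻¹' B) {f : (∀ i, X i) → ℝ≥0∞}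
    (hf : ∀ᵐ x ∂(Measure.pi μ).restrict D, ∀ i ∈ S, f x ≤ (∫⋯∫⁻_Sᶜ, G i ∂μ) x) :
    ∫⁻ x in D, f x ^ ((S.card : ℝ) / (S.card - 1)) ∂Measure.pi μ
      ≤ Measure.pi (fun i : ↥Sᶜ ↦ μ i) B * ∏ i ∈ S, A i ^ (1 / ((S.card : ℝ) - 1)) := by
  have hcard : (0 : ℝ) < S.card - 1 := by
    have : (2 : ℝ) ≤ S.card := by exact_mod_cast hS
    linarith
  set e := 1 / ((S.card : ℝ) - 1) with he
  have he0 : 0 ≤ e := by positivity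
  have hGm (i : ι) : Measurable (∫⋯∫⁻_Sᶜ, G i ∂μ) := (hG i).lmarginal μ
  have hpow (t : ℝ≥0∞) : t ^ ((S.card : ℝ) / (S.card - 1)) = ∏ _i ∈ S, t ^ e := by
    rw [Finset.prod_const, ← ENNReal.rpow_natCast, ← ENNReal.rpow_mul, he, one_div_mul_eq_div]
  have hfiber (x : ∀ i, X i) :
      (∫⋯∫⁻_S, fun y ↦ ∏ i ∈ S, (∫⋯∫⁻_Sᶜ, G i ∂μ) y ^ e ∂μ) x ≤ ∏ i ∈ S, A i ^ e := by
    refine (lmarginal_prod_rpow_le hS hGm (fun i hi ↦ dependsOn_lmarginal (hdep i hi) _)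
      subset_rfl x).trans (Finset.prod_le_prod' fun i hi ↦ ?_)
    rw [lmarginal_erase_lmarginal_compl (hG i) hi]
    gcongr
    exact hA i hi x
  calc ∫⁻ x in D, f x ^ ((S.card : ℝ) / (S.card - 1)) ∂Measure.pi μ
      ≤ ∫⁻ x in D, ∏ i ∈ S, (∫⋯∫⁻_Sᶜ, G i ∂μ) x ^ e ∂Measure.pi μ := by
        refine lintegral_mono_ae (hf.mono fun x hx ↦ (hpow _).trans_le ?_)
        exact Finset.prod_le_prod' fun i hi ↦ ENNReal.rpow_le_rpow (hx i hi) he0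
    _ ≤ ∫⁻ x in Sᶜ.restrict ⁻¹' B, ∏ i ∈ S, (∫⋯∫⁻_Sᶜ, G i ∂μ) x ^ e ∂Measure.pi μ :=
        lintegral_mono_set hD
    _ ≤ Measure.pi (fun i : ↥Sᶜ ↦ μ i) B * ∏ i ∈ S, A i ^ e :=
        setLIntegral_restrict_preimage_le hB
          (Finset.measurable_prod _ fun i _ ↦ (hGm i).pow_const e) (by rwa [compl_compl])

end Marginal

section Measurability

lemma exists_measurable_ge_lintegral_eq {α : Type*} [MeasurableSpace α] {μ : Measure α}
    {f : α → ℝ≥0∞} (hf : AEMeasurable f μ) :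
    ∃ g, Measurable g ∧ f ≤ g ∧ ∫⁻ x, g x ∂μ = ∫⁻ x, f x ∂μ := by
  obtain ⟨N, hN, hNm, hN0⟩ := exists_measurable_superset_of_null hf.ae_eq_mk
  refine ⟨hf.mk f + N.indicator ⊤, hf.measurable_mk.add (measurable_const.indicator hNm),
    fun x ↦ ?_, ?_⟩
  · by_cases hx : x ∈ N
    · simp [hx]
    · have : f x = hf.mk f x := by_contra fun h ↦ hx (hN h)
      simp [hx, this]
  · simp only [Pi.add_apply]
    rw [lintegral_add_left hf.measurable_mk, lintegral_indicator hNm,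
      setLIntegral_measure_zero _ _ hN0, add_zero, lintegral_congr_ae hf.ae_eq_mk]

lemma aemeasurable_indicator_of_quasiconvexOn {E : Type*} [NormedAddCommGroup E] [NormedSpace ℝ E]
    [FiniteDimensional ℝ E] [MeasurableSpace E] [BorelSpace E] {μ : Measure E} [μ.IsAddHaarMeasure]
    {K : Set E} {f : E → ℝ≥0∞} (hf : QuasiconvexOn ℝ K f) : AEMeasurable (K.indicator f) μ := by
  refine NullMeasurable.aemeasurable (measurable_of_Ioi (δ := NullMeasurableSpace E μ) fun c ↦ ?_)
  have hsuper : K.indicator f ⁻¹' Set.Ioi c = K \ {x ∈ K | f x ≤ c} := by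
    ext x
    by_cases hx : x ∈ K <;> simp [hx]
  have hnull : NullMeasurableSet (K.indicator f ⁻¹' Set.Ioi c) μ := by
    rw [hsuper]
    exact (hf.convex.nullMeasurableSet μ).diff ((hf c).nullMeasurableSet μ)
  exact hnull

lemma measure_mul_le_setLIntegral_of_two_mul_le_add {E : Type*} [AddGroup E] [MeasurableSpace E]
    [MeasurableNeg E] {μ : Measure E} [μ.IsNegInvariant] {B : Set E} (hB : MeasurableSet B)
    (hneg : ∀ z, -z ∈ B ↔ z ∈ B) {g : E → ℝ≥0∞} (hg : Measurable g) {a : ℝ≥0∞}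
    (ha : ∀ z ∈ B, 2 * a ≤ g z + g (-z)) : μ B * a ≤ ∫⁻ z in B, g z ∂μ := by
  have hreflect : ∫⁻ z in B, g (-z) ∂μ = ∫⁻ z in B, g z ∂μ := by
    have hpre : Neg.neg ⁻¹' B = B := Set.ext hneg
    conv_rhs => rw [← (Measure.measurePreserving_neg μ).setLIntegral_comp_preimage hB hg, hpre]
  refine (ENNReal.mul_le_mul_iff_right two_ne_zero ENNReal.ofNat_ne_top).1 ?_
  calc 2 * (μ B * a) = ∫⁻ _ in B, 2 * a ∂μ := by rw [setLIntegral_const]; ring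
    _ ≤ ∫⁻ z in B, (g z + g (-z)) ∂μ := setLIntegral_mono' hB ha
    _ = 2 * ∫⁻ z in B, g z ∂μ := by rw [lintegral_add_left hg, hreflect, two_mul]

end Measurability

section Means
open Finset

lemma prod_rpow_le_inv_card_mul_sum {ι : Type*} {S : Finset ι} (hS : S.Nonempty) (B : ι → ℝ≥0∞) :
    ∏ i ∈ S, B i ^ (1 / (#S : ℝ)) ≤ (#S : ℝ≥0∞)⁻¹ * ∑ i ∈ S, B i := by
  by_cases htop : ∃ i ∈ S, B i = ∞
  · simp [ENNReal.sum_eq_top.2 htop, ENNReal.mul_top]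
  push Not at htop
  have hcard : (#S : NNReal) ≠ 0 := by simpa using hS.ne_empty
  have hmean := NNReal.geom_mean_le_arith_mean_weighted S (fun _ ↦ (#S : NNReal)⁻¹)
    (fun i ↦ (B i).toNNReal) (by simp [hcard])
  have hcast := ENNReal.coe_le_coe.2 hmean
  rw [← Finset.mul_sum] at hcast
  push_cast [ENNReal.coe_inv hcard] at hcast
  convert hcast using 2 with i hi
  · rw [ENNReal.coe_rpow_of_nonneg _ (by positivity), ENNReal.coe_toNNReal (htop i hi), one_div]
  · exact sum_congr rfl fun i hi ↦ (ENNReal.coe_toNNReal (htop i hi)).symm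

lemma sum_add_mul_rpow_le {ι : Type*} {S : Finset ι} {σ : Equiv.Perm ι}
    (hσ : ∀ i, σ i ∈ S ↔ i ∈ S) {q : ℝ} (hq : 1 ≤ q) {θ : ℝ≥0∞} (hθ : θ ≠ ∞) (A : ι → ℝ≥0∞) :
    ∑ i ∈ S, (A i + θ * A (σ i)) ^ q ≤ (1 + θ) ^ q * ∑ i ∈ S, A i ^ q := by
  have hθ0 : 1 + θ ≠ 0 := by simp
  have hθt : 1 + θ ≠ ∞ := by finiteness
  have hperm : ∑ i ∈ S, A (σ i) ^ q = ∑ i ∈ S, A i ^ q :=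
    sum_equiv σ (fun i ↦ (hσ i).symm) fun _ _ ↦ rfl
  have hconv (a b : ℝ≥0∞) :
      (a + θ * b) ^ q ≤ (1 + θ) ^ q * ((1 + θ)⁻¹ * a ^ q + (1 + θ)⁻¹ * θ * b ^ q) := by
    calc (a + θ * b) ^ q = ((1 + θ) * ((1 + θ)⁻¹ * a + (1 + θ)⁻¹ * θ * b)) ^ q := by
          rw [mul_assoc _ θ, ← mul_add, ENNReal.mul_inv_cancel_left hθ0 hθt]
      _ = (1 + θ) ^ q * ((1 + θ)⁻¹ * a + (1 + θ)⁻¹ * θ * b) ^ q :=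
          ENNReal.mul_rpow_of_nonneg _ _ (by linarith)
      _ ≤ _ := by
          gcongr
          refine ENNReal.rpow_arith_mean_le_arith_mean2_rpow _ _ _ _ ?_ hq
          rw [← mul_one_add, ENNReal.inv_mul_cancel hθ0 hθt]
  calc ∑ i ∈ S, (A i + θ * A (σ i)) ^ q
      ≤ ∑ i ∈ S, (1 + θ) ^ q * ((1 + θ)⁻¹ * A i ^ q + (1 + θ)⁻¹ * θ * A (σ i) ^ q) :=
        sum_le_sum fun i _ ↦ hconv _ _
    _ = (1 + θ) ^ q * ((1 + θ)⁻¹ * (1 + θ) * ∑ i ∈ S, A i ^ q) := by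
        rw [← mul_sum, sum_add_distrib, ← mul_sum, ← mul_sum, hperm]; ring
    _ = (1 + θ) ^ q * ∑ i ∈ S, A i ^ q := by rw [ENNReal.inv_mul_cancel hθ0 hθt, one_mul]

lemma prod_add_mul_rpow_le {ι : Type*} {S : Finset ι} (hS : 2 ≤ #S) {σ : Equiv.Perm ι}
    (hσ : ∀ i, σ i ∈ S ↔ i ∈ S) {θ : ℝ≥0∞} (hθ : θ ≠ ∞) (A : ι → ℝ≥0∞) :
    ∏ i ∈ S, (A i + θ * A (σ i)) ^ (1 / ((#S : ℝ) - 1))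
      ≤ (#S : ℝ≥0∞)⁻¹ * (1 + θ) ^ ((#S : ℝ) / (#S - 1)) * ∑ i ∈ S, A i ^ ((#S : ℝ) / (#S - 1)) := by
  have hcard : (1 : ℝ) < #S := by exact_mod_cast hS
  have hcard' : (0 : ℝ) < #S - 1 := by linarith
  have hq : 1 ≤ (#S : ℝ) / (#S - 1) := by rw [le_div_iff₀ hcard']; linarith
  have hexp : 1 / ((#S : ℝ) - 1) = #S / (#S - 1) * (1 / #S) := by field_simp
  simp_rw [hexp, ENNReal.rpow_mul]
  refine (prod_rpow_le_inv_card_mul_sum (card_pos.1 (by omega)) _).trans ?_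
  rw [mul_assoc]
  gcongr
  exact sum_add_mul_rpow_le hσ hq hθ A

end Means

section Convexity

variable {n : ℕ} {K : Set (Fin n → ℝ)} {u : (Fin n → ℝ) → ℝ≥0∞}

lemma ConvexFnOn.quasiconvexOn (hu : ConvexFnOn K u) (hK : Convex ℝ K) : QuasiconvexOn ℝ K u := by
  intro c x hx y hy a b ha hb hab
  obtain rfl : a = 1 - b := by linarith
  refine ⟨hK hx.1 hy.1 ha hb hab, ?_⟩
  calc u ((1 - b) • x + b • y)
      ≤ ENNReal.ofReal (1 - b) * u x + ENNReal.ofReal b * u y :=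
        hu hx.1 hy.1 hb (by linarith)
    _ ≤ ENNReal.ofReal (1 - b) * c + ENNReal.ofReal b * c := by gcongr <;> [exact hx.2; exact hy.2]
    _ = c := by rw [← add_mul, ← ENNReal.ofReal_add ha hb, hab, ENNReal.ofReal_one, one_mul]

lemma ConvexFnOn.le_add_of_mem_segment (hu : ConvexFnOn K u) {x y z : Fin n → ℝ} (hx : x ∈ K)
    (hy : y ∈ K) (hz : z ∈ segment ℝ x y) : u z ≤ u x + u y := by
  rw [segment_eq_image] at hz
  obtain ⟨t, ⟨ht0, ht1⟩, rfl⟩ := hz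
  refine (hu hx hy ht0 ht1).trans (add_le_add ?_ ?_) <;>
    exact mul_le_of_le_one_left' (ENNReal.ofReal_le_one.2 (by linarith))

lemma ConvexFnOn.two_mul_le_add (hu : ConvexFnOn K u) {x z : Fin n → ℝ} (hadd : x + z ∈ K)
    (hsub : x - z ∈ K) : 2 * u x ≤ u (x + z) + u (x - z) := by
  have hmid : (1 - (1 / 2 : ℝ)) • (x + z) + (1 / 2 : ℝ) • (x - z) = x := by module
  have hhalf : ENNReal.ofReal (1 / 2) = 2⁻¹ := by
    rw [one_div, ENNReal.ofReal_inv_of_pos two_pos, ENNReal.ofReal_ofNat]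
  have h := hu hadd hsub (t := 1 / 2) (by norm_num) (by norm_num)
  rw [hmid, sub_half, hhalf, ← mul_add] at h
  calc 2 * u x ≤ 2 * (2⁻¹ * (u (x + z) + u (x - z))) := by gcongr
    _ = u (x + z) + u (x - z) := ENNReal.mul_inv_cancel_left two_ne_zero ENNReal.ofNat_ne_top

lemma ConvexFnOn.le_add_add_of_triangle (hu : ConvexFnOn K u) {x : Fin n → ℝ} {i j : Fin n} {ρ : ℝ}
    (hK : ∀ a b, 0 ≤ a → 0 ≤ b → a + b < 2 * ρ → update (update x i a) j b ∈ K)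
    (hi : 0 ≤ x i) (hj : 0 < x j) (hsum : x i + x j < ρ) :
    u x ≤ u (update (update x i 0) j (x j)) + u (update (update x i 0) j (x j + ρ))
      + 2⁻¹ * u (update (update x i (2 * (ρ - x j))) j 0) := by
  set a := x i
  set s := x j
  set γ : ℝ → ℝ → Fin n → ℝ := fun a b ↦ update (update x i a) j b with hγ
  set c := a / (2 * (ρ - s)) with hc
  have hc0 : 0 ≤ c := div_nonneg hi (by linarith)
  have hc1 : c ≤ 1 / 2 := by rw [hc, div_le_iff₀] <;> linarith
  have hx : (1 - c) • γ 0 (s / (1 - c)) + c • γ (2 * (ρ - s)) 0 = x := by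
    have hcs : 1 - c ≠ 0 := by linarith
    have hρs : 2 * (ρ - s) ≠ 0 := by linarith
    simp only [hγ, ← update_smul, ← update_add, ← add_smul, sub_add_cancel, one_smul, smul_eq_mul,
      mul_zero, zero_add, add_zero]
    rw [mul_div_cancel₀ _ hcs, hc, div_mul_cancel₀ _ hρs, update_eq_self, update_eq_self]
  have hheight : s / (1 - c) ∈ Set.Icc s (s + ρ) := by
    rw [Set.mem_Icc, le_div_iff₀ (by linarith), div_le_iff₀ (by linarith)]
    constructor <;> nlinarith
  have hedge : γ 0 (s / (1 - c)) ∈ segment ℝ (γ 0 s) (γ 0 (s + ρ)) := by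
    rw [hγ, ← Pi.image_update_segment]
    exact Set.mem_image_of_mem _ (Icc_subset_segment hheight)
  have hlow : γ 0 s ∈ K := hK _ _ le_rfl hj.le (by linarith)
  have hhigh : γ 0 (s + ρ) ∈ K := hK _ _ le_rfl (by linarith) (by linarith)
  have hfoot : γ (2 * (ρ - s)) 0 ∈ K := hK _ _ (by linarith) le_rfl (by linarith)
  have hpoint : γ 0 (s / (1 - c)) ∈ K :=
    hK _ _ le_rfl (div_nonneg hj.le (by linarith)) (by linarith [hheight.2])
  have hc2 : ENNReal.ofReal c ≤ 2⁻¹ := by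
    rw [← ENNReal.ofReal_ofNat, ← ENNReal.ofReal_inv_of_pos two_pos, ← one_div]
    exact ENNReal.ofReal_le_ofReal hc1
  calc u x = u ((1 - c) • γ 0 (s / (1 - c)) + c • γ (2 * (ρ - s)) 0) := by rw [hx]
    _ ≤ ENNReal.ofReal (1 - c) * u (γ 0 (s / (1 - c)))
          + ENNReal.ofReal c * u (γ (2 * (ρ - s)) 0) := hu hpoint hfoot hc0 (by linarith)
    _ ≤ 1 * (u (γ 0 s) + u (γ 0 (s + ρ))) + 2⁻¹ * u (γ (2 * (ρ - s)) 0) := by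
        gcongr
        · exact ENNReal.ofReal_le_one.2 (by linarith)
        · exact hu.le_add_of_mem_segment hlow hhigh hedge
    _ = u (γ 0 s) + u (γ 0 (s + ρ)) + 2⁻¹ * u (γ (2 * (ρ - s)) 0) := by rw [one_mul]

lemma ConvexFnOn.ofReal_pow_mul_le_lmarginal (hu : ConvexFnOn K u) {T : Finset (Fin n)} {δ : ℝ}
    (hδ : 0 < δ) {G : (Fin n → ℝ) → ℝ≥0∞} (hG : Measurable G) {x : Fin n → ℝ}
    (hbox : ∀ y, (∀ k ∉ T, y k = x k) → (∀ k ∈ T, |y k - x k| < δ) → y ∈ K ∧ u y ≤ G y) :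
    ENNReal.ofReal ((2 * δ) ^ T.card) * u x ≤ (∫⋯∫⁻_T, G ∂fun _ ↦ volume) x := by
  let ε : (T → ℝ) → Fin n → ℝ := updateFinset (0 : Fin n → ℝ) T
  have hε (z : T → ℝ) (hz : z ∈ Metric.ball 0 δ) : x + ε z ∈ K ∧ u (x + ε z) ≤ G (x + ε z) := by
    refine hbox _ (fun k hk ↦ by simp [ε, updateFinset, hk]) fun k hk ↦ ?_
    simpa [ε, updateFinset, hk] using
      (norm_le_pi_norm z ⟨k, hk⟩).trans_lt (mem_ball_zero_iff.1 hz)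
  have hε_neg (z : T → ℝ) : x + ε (-z) = x - ε z := by
    ext k
    by_cases hk : k ∈ T <;> simp [ε, updateFinset, hk, sub_eq_add_neg]
  have hε_add (z : T → ℝ) : x + ε z = updateFinset x T (T.restrict x + z) := by
    ext k
    by_cases hk : k ∈ T <;> simp [ε, updateFinset, hk]
  have hmeas : Measurable fun z ↦ G (x + ε z) :=
    hG.comp (measurable_updateFinset.const_add x)
  have hvol : volume (Metric.ball (0 : T → ℝ) δ) = ENNReal.ofReal ((2 * δ) ^ T.card) := by
    rw [Real.volume_pi_ball _ hδ, Fintype.card_coe]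
  have hneg_mem (z : T → ℝ) : -z ∈ Metric.ball 0 δ ↔ z ∈ Metric.ball 0 δ := by simp
  have hmid (z : T → ℝ) (hz : z ∈ Metric.ball 0 δ) :
      2 * u x ≤ G (x + ε z) + G (x + ε (-z)) := by
    have hz' := hε (-z) ((hneg_mem z).2 hz)
    refine (hu.two_mul_le_add (hε z hz).1 ?_).trans (add_le_add (hε z hz).2 ?_)
    · exact hε_neg z ▸ hz'.1
    · exact hε_neg z ▸ hz'.2
  calc ENNReal.ofReal ((2 * δ) ^ T.card) * u x
      ≤ ∫⁻ z in Metric.ball 0 δ, G (x + ε z) := by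
        rw [← hvol]
        exact measure_mul_le_setLIntegral_of_two_mul_le_add Metric.isOpen_ball.measurableSet
          hneg_mem hmeas hmid
    _ ≤ ∫⁻ z, G (x + ε z) := setLIntegral_le_lintegral _ _
    _ = (∫⋯∫⁻_T, G ∂fun _ ↦ volume) x := by
        simp_rw [hε_add]
        exact lintegral_add_left_eq_self (fun z ↦ G (updateFinset x T z)) _

end Convexity

section HyperplaneMeasure

variable {n : ℕ}

lemma exists_linearMap_hyperplaneMeasure_eq_map (m : ℕ) (i : Fin (m + 1)) :
    ∃ ℓ : (Fin m → ℝ) →ₗ[ℝ] (Fin (m + 1) → ℝ), MeasurableEmbedding ℓ ∧ (∀ y, ℓ y i = 0) ∧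
      hyperplaneMeasure (m + 1) i = Measure.map ℓ volume := by
  have hσ (j : Fin (m + 1)) : SigmaFinite (if j = i then Measure.dirac (0 : ℝ) else volume) := by
    split_ifs <;> infer_instance
  refine ⟨{ toFun := fun y ↦ i.insertNth (α := fun _ ↦ ℝ) 0 y, map_add' := ?_, map_smul' := ?_ },
    ?_, fun y ↦ Fin.insertNth_apply_same (α := fun _ ↦ ℝ) i 0 y, ?_⟩
  · intro y z
    ext j
    rcases Fin.eq_self_or_eq_succAbove i j with rfl | ⟨k, rfl⟩ <;> simp
  · intro a y
    ext j
    rcases Fin.eq_self_or_eq_succAbove i j with rfl | ⟨k, rfl⟩ <;> simp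
  · exact (MeasurableEquiv.piFinSuccAbove (fun _ ↦ ℝ) i).symm.measurableEmbedding.comp
      (measurableEmbedding_prodMk_left 0)
  · rw [hyperplaneMeasure, ← (measurePreserving_piFinSuccAbove _ i).symm.map_eq]
    simp only [if_true, Fin.succAbove_ne, if_false]
    rw [Measure.dirac_prod, Measure.map_map (MeasurableEquiv.measurable _) measurable_prodMk_left]
    rfl

lemma lintegral_hyperplaneMeasure_eq_lmarginal (i : Fin n) {f : (Fin n → ℝ) → ℝ≥0∞}
    (hf : Measurable f) (x : Fin n → ℝ) :
    ∫⁻ y, f y ∂hyperplaneMeasure n i =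
      (∫⋯∫⁻_Finset.univ.erase i, fun y ↦ f (update y i 0) ∂fun _ ↦ volume) x := by
  have hσ (j : Fin n) : SigmaFinite (if j = i then Measure.dirac (0 : ℝ) else volume) := by
    split_ifs <;> infer_instance
  rw [hyperplaneMeasure, lintegral_eq_lmarginal_univ x, lmarginal_erase' _ hf (Finset.mem_univ i)]
  simp only [if_true, lintegral_dirac]
  unfold lmarginal
  congr 2
  exact funext fun j ↦ if_neg (Finset.ne_of_mem_erase j.2)

lemma aemeasurable_indicator_hyperplaneMeasure {K : Set (Fin n → ℝ)} {u : (Fin n → ℝ) → ℝ≥0∞}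
    (hu : QuasiconvexOn ℝ K u) (i : Fin n) :
    AEMeasurable ({x ∈ K | x i = 0}.indicator u) (hyperplaneMeasure n i) := by
  obtain _ | m := n
  · exact i.elim0
  obtain ⟨ℓ, hℓ, hzero, hmap⟩ := exists_linearMap_hyperplaneMeasure_eq_map m i
  have hcomp : {x ∈ K | x i = 0}.indicator u ∘ ℓ = (ℓ ⁻¹' K).indicator (u ∘ ℓ) := by
    ext y
    by_cases hy : ℓ y ∈ K <;> simp [hy, hzero y]
  have hconv : QuasiconvexOn ℝ (ℓ ⁻¹' K) (u ∘ ℓ) := fun c ↦ (hu c).linear_preimage ℓ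
  rw [hmap, hℓ.aemeasurable_map_iff, hcomp]
  exact aemeasurable_indicator_of_quasiconvexOn hconv

/-- A face majorant of `u` on `K ∩ {xᵢ = 0}`: a measurable function above `u` there with the same
integral over the hyperplane, extended to all of `ℝⁿ` so as not to depend on the coordinate `i`. -/
structure IsFaceMajorant (K : Set (Fin n → ℝ)) (u : (Fin n → ℝ) → ℝ≥0∞) (i : Fin n)
    (w : (Fin n → ℝ) → ℝ≥0∞) : Prop where
  measurable : Measurable w
  dependsOn : DependsOn w {i}ᶜ
  le : ∀ y ∈ K, y i = 0 → u y ≤ w y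
  lmarginal_eq : ∀ x, (∫⋯∫⁻_Finset.univ.erase i, w ∂fun _ ↦ volume) x =
    ∫⁻ y in {y ∈ K | y i = 0}, u y ∂hyperplaneMeasure n i

lemma exists_isFaceMajorant {K : Set (Fin n → ℝ)} {u : (Fin n → ℝ) → ℝ≥0∞}
    (hK : MeasurableSet K) (hu : QuasiconvexOn ℝ K u) (i : Fin n) :
    ∃ w, IsFaceMajorant K u i w := by
  obtain ⟨v, hv, huv, hint⟩ :=
    exists_measurable_ge_lintegral_eq (aemeasurable_indicator_hyperplaneMeasure hu i)
  refine ⟨fun y ↦ v (update y i 0), hv.comp measurable_update_left,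
    dependsOn_compl_singleton_iff.2 fun y t ↦ by rw [update_idem], fun y hy hyi ↦ ?_, fun x ↦ ?_⟩
  · have hy0 : update y i 0 = y := by rw [← hyi, update_eq_self]
    simpa [hy0, hy, hyi] using huv y
  · rw [← lintegral_hyperplaneMeasure_eq_lmarginal i hv, hint, lintegral_indicator]
    exact hK.inter (measurableSet_eq_fun (measurable_pi_apply i) measurable_const)

end HyperplaneMeasure

section Majorant

/-- For `F` and `H` majorizing a convex function on the legs `{0} × [0, 2ρ)` and `[0, 2ρ) × {0}` of
a right triangle, `lineMajorant F H ρ s` bounds that function at every point of height `s > 0` in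
the half-size triangle. The cutoffs keep the two translates of `F` from overlapping. -/
noncomputable def lineMajorant (F H : ℝ → ℝ≥0∞) (ρ s : ℝ) : ℝ≥0∞ :=
  (Set.Iio ρ).indicator F s + (Set.Ici 0).indicator (fun t ↦ F (t + ρ)) s + 2⁻¹ * H (2 * (ρ - s))

lemma lintegral_lineMajorant {F H : ℝ → ℝ≥0∞} (hF : Measurable F) (hH : Measurable H) (ρ : ℝ) :
    ∫⁻ s, lineMajorant F H ρ s = (∫⁻ s, F s) + 4⁻¹ * ∫⁻ s, H s := by
  have htranslate : ∫⁻ s, (Set.Ici 0).indicator (fun t ↦ F (t + ρ)) s =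
      ∫⁻ s, (Set.Iio ρ)ᶜ.indicator F s := by
    rw [← lintegral_add_right_eq_self ((Set.Iio ρ)ᶜ.indicator F) ρ]
    refine lintegral_congr fun s ↦ ?_
    simp [Set.indicator]
  have hscale : ∫⁻ s, H (2 * (ρ - s)) = 2⁻¹ * ∫⁻ s, H s := by
    rw [lintegral_sub_left_eq_self (fun s ↦ H (2 * s)) ρ,
      ← lintegral_map hH (measurable_const_mul 2), Real.map_volume_mul_left two_ne_zero,
      lintegral_smul_measure, abs_of_pos (by norm_num), ENNReal.ofReal_inv_of_pos two_pos,
      ENNReal.ofReal_ofNat, smul_eq_mul]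
  have hquarter : (2⁻¹ : ℝ≥0∞) * 2⁻¹ = 4⁻¹ := by
    rw [← ENNReal.mul_inv (by simp) (by simp)]
    norm_num
  have hlow : Measurable ((Set.Iio ρ).indicator F) := hF.indicator measurableSet_Iio
  simp only [lineMajorant]
  rw [lintegral_add_right _ (by fun_prop), lintegral_add_left hlow, htranslate,
    lintegral_indicator measurableSet_Iio, lintegral_indicator measurableSet_Iio.compl,
    lintegral_add_compl _ measurableSet_Iio, lintegral_const_mul _ (by fun_prop), hscale,
    ← mul_assoc, hquarter]

variable {ι : Type*} [DecidableEq ι]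

/-- The envelope, along the plane of the coordinates `i` and `j`, of a convex function majorized by
`f` on `{xᵢ = 0}` and by `g` on `{xⱼ = 0}`, on the simplex `∑ k ∈ S, x k < d`: the triangle cut out
of that plane has legs of length `ρ = d - ∑ k ∈ S \ {i, j}, x k`. -/
noncomputable def pairMajorant (S : Finset ι) (d : ℝ) (i j : ι) (f g : (ι → ℝ) → ℝ≥0∞)
    (x : ι → ℝ) : ℝ≥0∞ :=
  lineMajorant (fun t ↦ f (update x j t)) (fun t ↦ g (update x i t))
    (d - ∑ k ∈ (S.erase i).erase j, x k) (x j)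

variable {S : Finset ι} {d : ℝ} {i j : ι} {f g : (ι → ℝ) → ℝ≥0∞}

lemma measurable_pairMajorant (hf : Measurable f) (hg : Measurable g) :
    Measurable (pairMajorant S d i j f g) := by
  have hupd (k : ι) {φ : (ι → ℝ) → ℝ} (hφ : Measurable φ) :
      Measurable fun x ↦ update x k (φ x) :=
    measurable_update'.comp (measurable_id.prodMk hφ)
  unfold pairMajorant lineMajorant
  simp only [Set.indicator_apply, Set.mem_Iio, Set.mem_Ici]
  refine (Measurable.add (.ite ?_ (hf.comp (hupd j (by fun_prop))) measurable_const)
    (.ite ?_ (hf.comp (hupd j (by fun_prop))) measurable_const)).add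
    (.const_mul (hg.comp (hupd i (by fun_prop))) _)
  · exact measurableSet_lt (by fun_prop) (by fun_prop)
  · exact measurableSet_le measurable_const (by fun_prop)

lemma dependsOn_pairMajorant (hij : i ≠ j) (hf : DependsOn f {i}ᶜ) :
    DependsOn (pairMajorant S d i j f g) {i}ᶜ := by
  refine dependsOn_compl_singleton_iff.2 fun x t ↦ ?_
  have hsum : ∑ k ∈ (S.erase i).erase j, update x i t k = ∑ k ∈ (S.erase i).erase j, x k :=
    Finset.sum_congr rfl fun k hk ↦
      update_of_ne (Finset.ne_of_mem_erase (Finset.mem_of_mem_erase hk)) _ _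
  simp only [pairMajorant, hsum, update_idem, update_of_ne hij.symm, update_comm hij,
    dependsOn_compl_singleton_iff.1 hf]

lemma lmarginal_pairMajorant [Fintype ι] (hij : i ≠ j) (hf : Measurable f) (hg : Measurable g)
    (hgj : DependsOn g {j}ᶜ) (x : ι → ℝ) :
    (∫⋯∫⁻_Finset.univ.erase i, pairMajorant S d i j f g ∂fun _ ↦ volume) x =
      (∫⋯∫⁻_Finset.univ.erase i, f ∂fun _ ↦ volume) x
        + 4⁻¹ * (∫⋯∫⁻_Finset.univ.erase j, g ∂fun _ ↦ volume) x := by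
  have hline (y : ι → ℝ) : ∫⁻ t, pairMajorant S d i j f g (update y j t) =
      (∫⁻ t, f (update y j t)) + 4⁻¹ * ∫⁻ t, g (update y i t) := by
    have hsum (t : ℝ) :
        ∑ k ∈ (S.erase i).erase j, update y j t k = ∑ k ∈ (S.erase i).erase j, y k :=
      Finset.sum_congr rfl fun k hk ↦ update_of_ne (Finset.ne_of_mem_erase hk) _ _
    rw [← lintegral_lineMajorant (F := fun t ↦ f (update y j t)) (H := fun t ↦ g (update y i t))
      (by fun_prop) (by fun_prop) (d - ∑ k ∈ (S.erase i).erase j, y k)]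
    simp only [pairMajorant, hsum, update_idem, update_self, update_comm hij.symm,
      dependsOn_compl_singleton_iff.1 hgj]
  have hmeas {φ : (ι → ℝ) → ℝ≥0∞} (hφ : Measurable φ) (k : ι) :
      Measurable fun z ↦ ∫⁻ t, φ (update (updateFinset x ((Finset.univ.erase i).erase j) z) k t) :=
    (Measurable.lintegral_prod_right' (hφ.comp measurable_update')).comp measurable_updateFinset
  rw [lmarginal_erase' _ (measurable_pairMajorant hf hg) (show j ∈ Finset.univ.erase i by grind),
    lmarginal_erase' _ hf (show j ∈ Finset.univ.erase i by grind),
    lmarginal_erase' _ hg (show i ∈ Finset.univ.erase j by grind), Finset.erase_right_comm (a := j)]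
  unfold lmarginal
  simp only [hline]
  rw [lintegral_add_left (hmeas hf j), lintegral_const_mul _ (hmeas hg i)]

end Majorant

section Slab

variable {n p : ℕ} {r : ℝ} {u : (Fin n → ℝ) → ℝ≥0∞}

lemma convex_stdSlab (n p : ℕ) (r : ℝ) : Convex ℝ (stdSlab n p r) := by
  intro x hx y hy a b ha hb hab
  refine ⟨fun i hi ↦ convex_Ici (0 : ℝ) (hx.1 i hi) (hy.1 i hi) ha hb hab,
    fun i hi ↦ convex_Ioo (-r) r (hx.2.1 i hi) (hy.2.1 i hi) ha hb hab, ?_⟩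
  simpa [Finset.sum_add_distrib, Finset.mul_sum] using
    convex_Iio r hx.2.2 hy.2.2 ha hb hab

lemma measurableSet_stdSlab (n p : ℕ) (r : ℝ) : MeasurableSet (stdSlab n p r) := by
  have hsplit : stdSlab n p r = (⋂ (i : Fin n) (_ : (i : ℕ) < p), {x | 0 ≤ x i}) ∩
      ((⋂ (i : Fin n) (_ : p ≤ (i : ℕ)), {x | x i ∈ Set.Ioo (-r) r}) ∩
      {x | ∑ i ∈ Finset.univ.filter (fun i : Fin n => (i : ℕ) < p), x i < r}) := by
    ext x
    simp [stdSlab]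
  rw [hsplit]
  measurability

/-- The coordinates `x₁, …, x_p` of the simplex factor of `Δⁿ_p(r)`. -/
abbrev simplexIndices (n p : ℕ) : Finset (Fin n) := Finset.univ.filter fun i : Fin n => (i : ℕ) < p

lemma card_simplexIndices (hpn : p ≤ n) : (simplexIndices n p).card = p := by
  rw [Fin.card_filter_val_lt, min_eq_right hpn]

lemma card_compl_simplexIndices (hpn : p ≤ n) : (simplexIndices n p)ᶜ.card = n - p := by
  rw [Finset.card_compl, Fintype.card_fin, card_simplexIndices hpn]

lemma mem_simplexIndices {i : Fin n} : i ∈ simplexIndices n p ↔ (i : ℕ) < p := by simp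

lemma update_update_mem_stdSlab {x : Fin n → ℝ} (hx : x ∈ stdSlab n p r) {i j : Fin n}
    (hij : i ≠ j) (hi : i ∈ simplexIndices n p) (hj : j ∈ simplexIndices n p) {a b : ℝ}
    (ha : 0 ≤ a) (hb : 0 ≤ b)
    (hab : a + b + ∑ k ∈ ((simplexIndices n p).erase i).erase j, x k < r) :
    update (update x i a) j b ∈ stdSlab n p r := by
  refine ⟨fun k hk ↦ ?_, fun k hk ↦ ?_, ?_⟩
  · rcases eq_or_ne k j with rfl | hkj
    · simpa
    rcases eq_or_ne k i with rfl | hki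
    · simpa [hkj]
    · simpa [hkj, hki] using hx.1 k hk
  · rw [update_of_ne (by grind), update_of_ne (by grind)]
    exact hx.2.1 k hk
  · rw [← Finset.add_sum_erase _ _ hi,
      ← Finset.add_sum_erase _ _ (Finset.mem_erase.2 ⟨hij.symm, hj⟩)]
    simp only [update_of_ne hij, update_self]
    convert hab using 1
    rw [add_assoc]
    congr 2
    refine Finset.sum_congr rfl fun k hk ↦ ?_
    rw [update_of_ne (by grind), update_of_ne (by grind)]

lemma ConvexFnOn.le_pairMajorant (hu : ConvexFnOn (stdSlab n p r) u) {i j : Fin n}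
    {f g : (Fin n → ℝ) → ℝ≥0∞} (hf : IsFaceMajorant (stdSlab n p r) u i f)
    (hg : IsFaceMajorant (stdSlab n p r) u j g) (hij : i ≠ j) (hi : i ∈ simplexIndices n p)
    (hj : j ∈ simplexIndices n p) {x : Fin n → ℝ} (hx : x ∈ stdSlab n p r) (hxj : 0 < x j)
    (hsum : ∑ k ∈ simplexIndices n p, x k < r / 2) :
    u x ≤ pairMajorant (simplexIndices n p) (r / 2) i j f g x := by
  set S := simplexIndices n p
  set ρ := r / 2 - ∑ k ∈ (S.erase i).erase j, x k with hρ
  have hrest : 0 ≤ ∑ k ∈ (S.erase i).erase j, x k :=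
    Finset.sum_nonneg fun k hk ↦ hx.1 k (mem_simplexIndices.1 (by grind))
  have hij_lt : x i + x j < ρ := by
    rw [← Finset.add_sum_erase _ _ hi,
      ← Finset.add_sum_erase _ _ (Finset.mem_erase.2 ⟨hij.symm, hj⟩)] at hsum
    linarith
  have hplane (a b : ℝ) (ha : 0 ≤ a) (hb : 0 ≤ b) (hab : a + b < 2 * ρ) :
      update (update x i a) j b ∈ stdSlab n p r :=
    update_update_mem_stdSlab hx hij hi hj ha hb (by linarith)
  have hedge_i (b : ℝ) (hb : 0 ≤ b) (hbρ : b < 2 * ρ) :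
      u (update (update x i 0) j b) ≤ f (update x j b) := by
    refine (hf.le _ (hplane 0 b le_rfl hb (by linarith)) (by simp [hij])).trans_eq ?_
    rw [update_comm hij, dependsOn_compl_singleton_iff.1 hf.dependsOn]
  have hedge_j (a : ℝ) (ha : 0 ≤ a) (haρ : a < 2 * ρ) :
      u (update (update x i a) j 0) ≤ g (update x i a) :=
    (hg.le _ (hplane a 0 ha le_rfl (by linarith)) (by simp)).trans_eq
      (dependsOn_compl_singleton_iff.1 hg.dependsOn _ _)
  have hxi : 0 ≤ x i := hx.1 i (mem_simplexIndices.1 hi)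
  calc u x ≤ u (update (update x i 0) j (x j)) + u (update (update x i 0) j (x j + ρ))
        + 2⁻¹ * u (update (update x i (2 * (ρ - x j))) j 0) :=
        hu.le_add_add_of_triangle hplane hxi hxj hij_lt
    _ ≤ f (update x j (x j)) + f (update x j (x j + ρ)) + 2⁻¹ * g (update x i (2 * (ρ - x j))) := by
        gcongr
        · exact hedge_i _ hxj.le (by linarith)
        · exact hedge_i _ (by linarith) (by linarith)
        · exact hedge_j _ (by linarith) (by linarith)
    _ = pairMajorant S (r / 2) i j f g x := by
        simp [pairMajorant, lineMajorant, ← hρ, hxj.le, show x j < ρ by linarith]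

lemma ConvexFnOn.ofReal_pow_mul_le_lmarginal_pairMajorant (hr : 0 < r) (hpn : p ≤ n)
    (hu : ConvexFnOn (stdSlab n p r) u) {i j : Fin n} {f g : (Fin n → ℝ) → ℝ≥0∞}
    (hf : IsFaceMajorant (stdSlab n p r) u i f) (hg : IsFaceMajorant (stdSlab n p r) u j g)
    (hij : i ≠ j) (hi : i ∈ simplexIndices n p) (hj : j ∈ simplexIndices n p) {x : Fin n → ℝ}
    (hx : x ∈ stdSlab n p (r / 2)) (hxj : 0 < x j) :
    ENNReal.ofReal (r ^ (n - p)) * u x ≤ (∫⋯∫⁻_(simplexIndices n p)ᶜ,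
      pairMajorant (simplexIndices n p) (r / 2) i j f g ∂fun _ ↦ volume) x := by
  set S := simplexIndices n p
  have havg := hu.ofReal_pow_mul_le_lmarginal (T := Sᶜ) (x := x) (half_pos hr)
    (measurable_pairMajorant (S := S) (d := r / 2) (i := i) (j := j) hf.measurable hg.measurable)
    fun y hyS hyc ↦ ?_
  · rwa [mul_div_cancel₀ r two_ne_zero, card_compl_simplexIndices hpn] at havg
  · have hyx (k : Fin n) (hk : k ∈ S) : y k = x k := hyS k (by simpa using hk)
    have hsum : ∑ k ∈ S, y k < r / 2 := (Finset.sum_congr rfl hyx).trans_lt hx.2.2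
    have hy : y ∈ stdSlab n p r := by
      refine ⟨fun k hk ↦ hyx k (mem_simplexIndices.2 hk) ▸ hx.1 k hk, fun k hk ↦ ?_, by linarith⟩
      obtain ⟨hx_lo, hx_hi⟩ := hx.2.1 k hk
      obtain ⟨hy_lo, hy_hi⟩ := abs_sub_lt_iff.1 (hyc k (by simpa [S] using hk))
      constructor <;> linarith
    exact ⟨hy, hu.le_pairMajorant hf hg hij hi hj hy (hyx j hj ▸ hxj) hsum⟩

lemma stdSlab_subset_restrict_preimage_ball (hr : 0 < r) :
    stdSlab n p r ⊆ (simplexIndices n p)ᶜ.restrict ⁻¹' Metric.ball 0 r := by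
  intro x hx
  rw [Set.mem_preimage, mem_ball_zero_iff, pi_norm_lt_iff hr]
  rintro ⟨k, hk⟩
  exact abs_lt.2 (hx.2.1 k (by simpa using hk))

theorem ConvexFnOn.ofReal_rpow_mul_lintegral_le (hp : 2 ≤ p) (hpn : p ≤ n) (hr : 0 < r)
    (hu : ConvexFnOn (stdSlab n p r) u) {σ : Equiv.Perm (Fin n)}
    (hσ : ∀ i, σ i ∈ simplexIndices n p ↔ i ∈ simplexIndices n p)
    (hσ_ne : ∀ i ∈ simplexIndices n p, σ i ≠ i) :
    ENNReal.ofReal (r ^ (n - p)) ^ ((p : ℝ) / (p - 1)) *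
        ∫⁻ x in stdSlab n p (r / 2), u x ^ ((p : ℝ) / (p - 1))
      ≤ ENNReal.ofReal (r ^ (n - p)) * ∏ i ∈ simplexIndices n p,
          (faceIntegral n p r i u + 4⁻¹ * faceIntegral n p r (σ i) u) ^ (1 / ((p : ℝ) - 1)) := by
  have hcard := card_simplexIndices hpn
  set S := simplexIndices n p
  have hq : 0 ≤ (p : ℝ) / (p - 1) :=
    div_nonneg (by positivity) (sub_nonneg.2 (by exact_mod_cast one_le_two.trans hp))
  choose w hw using fun i ↦ exists_isFaceMajorant (measurableSet_stdSlab n p r)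
    (hu.quasiconvexOn (convex_stdSlab n p r)) i
  let G (i : Fin n) := pairMajorant S (r / 2) i (σ i) (w i) (w (σ i))
  have hGint (i) (hi : i ∈ S) (x) : (∫⋯∫⁻_Finset.univ.erase i, G i ∂fun _ ↦ volume) x =
      faceIntegral n p r i u + 4⁻¹ * faceIntegral n p r (σ i) u := by
    rw [lmarginal_pairMajorant (hσ_ne i hi).symm (hw i).measurable (hw (σ i)).measurable
      (hw (σ i)).dependsOn, (hw i).lmarginal_eq, (hw (σ i)).lmarginal_eq]
    rfl
  have hvol : volume (Metric.ball (0 : ↥Sᶜ → ℝ) (r / 2)) = ENNReal.ofReal (r ^ (n - p)) := by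
    rw [Real.volume_pi_ball _ (half_pos hr), Fintype.card_coe, card_compl_simplexIndices hpn,
      mul_div_cancel₀ r two_ne_zero]
  have hne : ∀ᵐ x : Fin n → ℝ, ∀ i, x i ≠ 0 :=
    ae_all_iff.2 fun i ↦ Measure.ae_eval_ne (μ := fun _ ↦ volume) i 0
  have hbound : ∀ᵐ x ∂volume.restrict (stdSlab n p (r / 2)), ∀ i ∈ S,
      ENNReal.ofReal (r ^ (n - p)) * u x ≤ (∫⋯∫⁻_Sᶜ, G i ∂fun _ ↦ volume) x := by
    filter_upwards [ae_restrict_mem (measurableSet_stdSlab n p (r / 2)), ae_restrict_of_ae hne]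
      with x hx hx0 i hi
    have hσi := (hσ i).2 hi
    exact hu.ofReal_pow_mul_le_lmarginal_pairMajorant hr hpn (hw i) (hw (σ i)) (hσ_ne i hi).symm
      hi hσi hx ((hx.1 _ (mem_simplexIndices.1 hσi)).lt_of_ne' (hx0 _))
  have hmain := setLIntegral_rpow_le_of_le_lmarginal (μ := fun _ : Fin n ↦ volume) (hcard ▸ hp)
    (fun i ↦ measurable_pairMajorant (hw i).measurable (hw (σ i)).measurable)
    (fun i hi ↦ dependsOn_pairMajorant (hσ_ne i hi).symm (hw i).dependsOn)
    (fun i hi x ↦ (hGint i hi x).le) Metric.isOpen_ball.measurableSet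
    (stdSlab_subset_restrict_preimage_ball (half_pos hr)) hbound
  rw [hcard, ← volume_pi, ← volume_pi, hvol] at hmain
  rw [← lintegral_const_mul' _ _ (by finiteness)]
  simpa only [ENNReal.mul_rpow_of_nonneg _ _ hq] using hmain

end Slab

section Constants

lemma le_rpow_one_sub_mul_of_rpow_mul_le_mul {c a b : ℝ≥0∞} (hc0 : c ≠ 0) (hct : c ≠ ∞) {q : ℝ}
    (h : c ^ q * a ≤ c * b) : a ≤ c ^ (1 - q) * b := by
  calc a = c ^ (-q) * (c ^ q * a) := by rw [← mul_assoc, ← ENNReal.rpow_add _ _ hc0 hct]; simp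
    _ ≤ c ^ (-q) * (c * b) := by gcongr
    _ = c ^ (1 - q) * b := by
        rw [← mul_assoc, sub_eq_neg_add, ENNReal.rpow_add _ _ hc0 hct, ENNReal.rpow_one]

lemma ofReal_pow_rpow_one_sub_le {n p : ℕ} (hp : 2 ≤ p) (hpn : p ≤ n) {r : ℝ} (hr : 0 < r) :
    ENNReal.ofReal (r ^ (n - p)) ^ (1 - (p : ℝ) / (p - 1))
      ≤ ENNReal.ofReal ((2 / r) ^ (((n : ℝ) - p) / (p - 1))) := by
  have hp1 : (0 : ℝ) < p - 1 := by
    have : (2 : ℝ) ≤ p := by exact_mod_cast hp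
    linarith
  have hexp0 : 0 ≤ ((n : ℝ) - p) / (p - 1) :=
    div_nonneg (sub_nonneg.2 (by exact_mod_cast hpn)) hp1.le
  have hexp : ((n : ℝ) - p) * (1 - p / (p - 1)) = -(((n : ℝ) - p) / (p - 1)) := by
    field_simp
    ring
  have hpow : (r ^ (n - p)) ^ (1 - (p : ℝ) / (p - 1)) = (1 / r) ^ (((n : ℝ) - p) / (p - 1)) := by
    rw [← Real.rpow_natCast, ← Real.rpow_mul hr.le, Nat.cast_sub hpn, hexp, one_div,
      Real.inv_rpow hr.le, Real.rpow_neg hr.le]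
  rw [ENNReal.ofReal_rpow_of_pos (by positivity), hpow]
  gcongr
  norm_num

lemma inv_mul_one_add_rpow_le {p : ℕ} (hp : 2 ≤ p) :
    (p : ℝ≥0∞)⁻¹ * (1 + 4⁻¹) ^ ((p : ℝ) / (p - 1)) ≤ ENNReal.ofReal ((p : ℝ) - 1) := by
  have hp2 : (2 : ℝ) ≤ p := by exact_mod_cast hp
  have hq : (p : ℝ) / (p - 1) ≤ 2 := by rw [div_le_iff₀] <;> linarith
  have hreal : (p : ℝ)⁻¹ * (5 / 4) ^ 2 ≤ p - 1 := by
    rw [inv_mul_le_iff₀ (by linarith)]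
    nlinarith
  have hbase : (1 + 4⁻¹ : ℝ≥0∞) = ENNReal.ofReal (5 / 4) := by
    rw [← ENNReal.ofReal_one, ← ENNReal.ofReal_ofNat, ← ENNReal.ofReal_inv_of_pos (by norm_num),
      ← ENNReal.ofReal_add (by norm_num) (by norm_num)]
    norm_num
  calc (p : ℝ≥0∞)⁻¹ * (1 + 4⁻¹) ^ ((p : ℝ) / (p - 1))
      ≤ (p : ℝ≥0∞)⁻¹ * (1 + 4⁻¹) ^ (2 : ℝ) := by
        gcongr
        exact le_self_add
    _ = ENNReal.ofReal ((p : ℝ)⁻¹ * (5 / 4) ^ 2) := by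
        rw [hbase, ENNReal.rpow_two, ENNReal.ofReal_mul (by positivity),
          ENNReal.ofReal_inv_of_pos (by linarith), ENNReal.ofReal_natCast,
          ENNReal.ofReal_pow (by norm_num)]
    _ ≤ ENNReal.ofReal ((p : ℝ) - 1) := ENNReal.ofReal_le_ofReal hreal

end Constants

/-- Local Poincaré type estimate: for `2 ≤ p ≤ n`, `r > 0` and convex
`u : Δⁿ_p(r) → [0,∞]`,
`∫_{Δⁿ_p(r/2)} u^{p/(p−1)} dλⁿ ≤ (p−1)·(2/r)^{(n−p)/(p−1)} · ∑_{i<p} (∫_{∂ᵢΔⁿ_p(r)} u dx')^{p/(p−1)}`. -/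
theorem local_poincare_estimate (n p : ℕ) (hp : 2 ≤ p) (hpn : p ≤ n)
    (r : ℝ) (hr : 0 < r) (u : (Fin n → ℝ) → ℝ≥0∞)
    (hu : ConvexFnOn (stdSlab n p r) u) :
    ∫⁻ x in stdSlab n p (r / 2), u x ^ ((p : ℝ) / ((p : ℝ) - 1))
      ≤ ENNReal.ofReal (((p : ℝ) - 1) * (2 / r) ^ (((n : ℝ) - (p : ℝ)) / ((p : ℝ) - 1)))
          * ∑ i ∈ Finset.univ.filter (fun i : Fin n => (i : ℕ) < p),
              (faceIntegral n p r i u) ^ ((p : ℝ) / ((p : ℝ) - 1)) := by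
  have hcard := card_simplexIndices hpn
  set S := simplexIndices n p
  set q := (p : ℝ) / (p - 1)
  have hp1 : (1 : ℝ) ≤ p := by exact_mod_cast one_le_two.trans hp
  obtain ⟨σ, hσ, -⟩ := S.exists_cycleOn
  have hσS (i : Fin n) : σ i ∈ S ↔ i ∈ S := hσ.apply_mem_iff
  have hσ_ne (i : Fin n) (hi : i ∈ S) : σ i ≠ i :=
    hσ.apply_ne (Finset.one_lt_card_iff_nontrivial.1 (by omega)) hi
  have hcore := hu.ofReal_rpow_mul_lintegral_le hp hpn hr hσS hσ_ne
  have hmean := prod_add_mul_rpow_le (θ := 4⁻¹) (hcard ▸ hp) hσS (by simp)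
    fun i ↦ faceIntegral n p r i u
  rw [hcard] at hmean
  calc ∫⁻ x in stdSlab n p (r / 2), u x ^ q
      ≤ ENNReal.ofReal (r ^ (n - p)) ^ (1 - q) *
          ((p : ℝ≥0∞)⁻¹ * (1 + 4⁻¹) ^ q * ∑ i ∈ S, faceIntegral n p r i u ^ q) :=
        (le_rpow_one_sub_mul_of_rpow_mul_le_mul (by positivity) (by finiteness) hcore).trans
          (by gcongr)
    _ ≤ ENNReal.ofReal ((2 / r) ^ (((n : ℝ) - p) / (p - 1))) *
          (ENNReal.ofReal (p - 1) * ∑ i ∈ S, faceIntegral n p r i u ^ q) := by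
        gcongr
        exacts [ofReal_pow_rpow_one_sub_le hp hpn hr, inv_mul_one_add_rpow_le hp]
    _ = _ := by rw [ENNReal.ofReal_mul (by linarith)]; ring
end
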